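/- Let A ∈ ℂ^{m×m}, ε ≥ 0, and z₀ ∈ ℂ be such that ε is not a singular value of A − z₀I. Then the function θ ↦ a_ε(θ), viewed as a 2π-periodic function of θ ∈ ℝ, is continuous. -/

import Mathlib

open Complex Matrix MeasureTheory Set Polynomial Topology

noncomputable section

open scoped Classical

/-- `s` is a singular value of the square complex matrix `M`:
`s ≥ 0` and `s²` is an eigenvalue of `M Mᴴ`. -/
def IsSingularValue {k : ℕ} (M : Matrix (Fin k) (Fin k) ℂ) (s : ℝ) : Prop :=
  0 ≤ s ∧ (M * Mᴴ - ((s : ℂ) ^ 2) • 1).det = 0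

/-- The smallest singular value of `M`. -/
def sigmaMin {k : ℕ} (M : Matrix (Fin k) (Fin k) ℂ) : ℝ :=
  sInf {s : ℝ | IsSingularValue M s}

/-- The `ε`-pseudospectrum of `M`. -/
def pspec {k : ℕ} (ε : ℝ) (M : Matrix (Fin k) (Fin k) ℂ) : Set ℂ :=
  {z : ℂ | sigmaMin (M - z • 1) ≤ ε}

/-- The ray emanating from `z₀` in direction `θ`. -/
def ray (z₀ : ℂ) (θ : ℝ) : Set ℂ :=
  {z : ℂ | ∃ r : ℝ, 0 < r ∧ z = z₀ + (r : ℂ) * Complex.exp ((θ : ℂ) * Complex.I)}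

/-- The matrix `C` of the pencil `(C, D_θ)` associated with `A`, `ε`, `z₀`. -/
def pencilC {m : ℕ} (A : Matrix (Fin m) (Fin m) ℂ) (ε : ℝ) (z₀ : ℂ) :
    Matrix (Fin m ⊕ Fin m) (Fin m ⊕ Fin m) ℂ :=
  Matrix.fromBlocks (A - z₀ • 1) ((-(ε : ℂ)) • 1) ((ε : ℂ) • 1) (-(A - z₀ • 1)ᴴ)

/-- The matrix `D_θ` of the pencil `(C, D_θ)`. -/
def pencilD (m : ℕ) (θ : ℝ) : Matrix (Fin m ⊕ Fin m) (Fin m ⊕ Fin m) ℂ :=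
  Matrix.fromBlocks ((-(Complex.I * Complex.exp ((θ : ℂ) * Complex.I))) • 1) 0 0
    ((Complex.I * Complex.exp (-((θ : ℂ) * Complex.I))) • 1)

/-- The spectrum of a matrix pencil `(C, D)`: all `λ` with `det (C - λ D) = 0`. -/
def pencilSpec {k : Type} [Fintype k] [DecidableEq k] (C D : Matrix k k ℂ) : Set ℂ :=
  {lam : ℂ | (C - lam • D).det = 0}

/-- The function `a_ε(θ) = min {(Arg (-iλ))² : λ ∈ Λ(C, D_θ), Re λ ≤ 0}`. -/
def aFun {m : ℕ} (A : Matrix (Fin m) (Fin m) ℂ) (ε : ℝ) (z₀ : ℂ) (θ : ℝ) : ℝ :=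
  sInf {x : ℝ | ∃ lam ∈ pencilSpec (pencilC A ε z₀) (pencilD m θ),
    lam.re ≤ 0 ∧ x = (Complex.arg (-Complex.I * lam)) ^ 2}

/-! Since `det D_θ = 1`, the spectrum of the pencil is that of the matrix `C D_θ⁻¹`, which depends
continuously on `θ`; so the spectrum is both upper and lower hemicontinuous in `θ`. With the
symplectic matrix `J` we have `J Cᴴ J = C` and `J D_θᴴ J = -D_θ`, which makes the spectrum
symmetric about the imaginary axis. The reflection `λ ↦ -conj λ` turns `-iλ` into its conjugate and
so preserves `(Arg (-iλ))²`: the minimum may be taken over the whole spectrum, and it does no harm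
that eigenvalues cross the boundary of `Re λ ≤ 0` as `θ` varies. Squaring also removes the branch
cut of `Arg`, which leaves the origin as the only discontinuity, and `0` is an eigenvalue only if
`det C = 0`. As `det C = ± det ((A - z₀) (A - z₀)ᴴ - ε²)`, this is what the hypothesis on `ε`
excludes. -/

open scoped ComplexConjugate

section SInfImage

variable {X Y γ : Type*} [TopologicalSpace X] [TopologicalSpace Y]
  [TopologicalSpace γ] {s : X → Set Y} {f : Y → γ} {x : X}

theorem eventually_forall_lt_of_upperHemicontinuousAt [LinearOrder γ] [OrderTopology γ]
    (hs : UpperHemicontinuousAt s x) (hf : ∀ y ∈ s x, ContinuousAt f y) {a : γ}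
    (ha : ∀ y ∈ s x, a < f y) : ∀ᶠ x' in 𝓝 x, ∀ y ∈ s x', a < f y := by
  have hnhds : {y | a < f y} ∈ 𝓝ˢ (s x) :=
    mem_nhdsSet_iff_forall.2 fun y hy => (hf y hy).eventually_const_lt (ha y hy)
  exact (hs _ hnhds).mono fun x' hx' => subset_of_mem_nhdsSet hx'

theorem eventually_exists_lt_of_lowerHemicontinuousAt [LinearOrder γ] [OrderTopology γ]
    (hs : LowerHemicontinuousAt s x) {y : Y} (hy : y ∈ s x) (hf : ContinuousAt f y) {a : γ}
    (ha : f y < a) : ∀ᶠ x' in 𝓝 x, ∃ y' ∈ s x', f y' < a := by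
  obtain ⟨u, hu, hu_open, hyu⟩ := mem_nhds_iff.1 (hf.eventually_lt_const ha)
  filter_upwards [lowerHemicontinuousAt_iff.1 hs u hu_open ⟨y, hy, hyu⟩] with x' ⟨y', hy', hyu'⟩
  exact ⟨y', hy', hu hyu'⟩

variable [ConditionallyCompleteLinearOrder γ] [DenselyOrdered γ] [NoMinOrder γ] [OrderTopology γ]

theorem continuousAt_sInf_image (hupper : UpperHemicontinuousAt s x)
    (hlower : LowerHemicontinuousAt s x) (hbdd : BddBelow (f '' s x))
    (hf : ∀ y ∈ s x, ContinuousAt f y) : ContinuousAt (fun x' => sInf (f '' s x')) x := by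
  rcases (s x).eq_empty_or_nonempty with hempty | ⟨y₀, hy₀⟩
  · have hev : ∀ᶠ x' in 𝓝 x, s x' = ∅ :=
      (hupper ∅ (by simp [hempty])).mono fun _ hx' =>
        subset_empty_iff.1 (subset_of_mem_nhdsSet hx')
    exact (continuousAt_const (y := sInf ∅)).congr
      (hev.mono fun x' hx' => by simp only [hx', image_empty])
  have hlt : ∀ {a : γ}, a < sInf (f '' s x) → ∀ᶠ x' in 𝓝 x, ∀ y ∈ s x', a < f y := fun ha =>
    eventually_forall_lt_of_upperHemicontinuousAt hupper hf fun y hy =>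
      ha.trans_le (csInf_le hbdd (mem_image_of_mem f hy))
  obtain ⟨b, hb⟩ := exists_lt (sInf (f '' s x))
  refine tendsto_order.2 ⟨fun a ha => ?_, fun a ha => ?_⟩
  · obtain ⟨a', haa', ha'⟩ := exists_between ha
    filter_upwards [hlt ha', hlower univ ⟨isOpen_univ, y₀, hy₀, mem_univ y₀⟩]
      with x' hx' ⟨_, y, hy, _⟩
    exact haa'.trans_le <| le_csInf ⟨f y, mem_image_of_mem f hy⟩ <|
      forall_mem_image.2 fun y hy => (hx' y hy).le
  · obtain ⟨_, ⟨y, hy, rfl⟩, hya⟩ := exists_lt_of_csInf_lt ⟨f y₀, mem_image_of_mem f hy₀⟩ ha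
    filter_upwards [hlt hb, eventually_exists_lt_of_lowerHemicontinuousAt hlower hy (hf y hy) hya]
      with x' hx' ⟨y', hy', hya'⟩
    exact csInf_lt_of_lt ⟨b, forall_mem_image.2 fun y hy => (hx' y hy).le⟩
      (mem_image_of_mem f hy') hya'

end SInfImage

theorem exists_mem_roots_norm_sub_lt {K : Type*} [NormedField K] {p : K[X]} (hp : p.Monic)
    (hsplits : p.Splits) {w : K} {δ : ℝ} (hδ : 0 ≤ δ) (hw : ‖p.eval w‖ < δ ^ p.natDegree) :
    ∃ z ∈ p.roots, ‖w - z‖ < δ := by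
  by_contra! hfar
  refine hw.not_ge ?_
  calc δ ^ p.natDegree = (p.roots.map fun _ => δ).prod := by
        rw [Multiset.map_const', Multiset.prod_replicate, hsplits.natDegree_eq_card_roots]
    _ ≤ (p.roots.map fun z => ‖w - z‖).prod :=
        Multiset.prod_map_le_prod_map₀ _ _ (fun _ _ => hδ) hfar
    _ = ‖p.eval w‖ := by
        rw [hsplits.eval_eq_prod_roots_of_monic hp]
        exact Multiset.prod_hom' _ (normHom : K →*₀ ℝ) _

section MatrixSpectrum

variable {n : Type*} [Fintype n] [DecidableEq n]

open scoped Matrix.Norms.Operator in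
theorem upperHemicontinuous_matrix_spectrum (K : Type*) [NormedField K] [ProperSpace K] :
    UpperHemicontinuous (spectrum K : Matrix n n K → Set K) :=
  @upperHemicontinuous_spectrum K (Matrix n n K) _ _ _ _ (Matrix.instCompleteSpace ..)

theorem lowerHemicontinuous_matrix_spectrum (K : Type*) [NormedField K] [IsAlgClosed K] :
    LowerHemicontinuous (spectrum K : Matrix n n K → Set K) := by
  refine fun M => lowerHemicontinuousAt_iff.2 ?_
  rintro u hu ⟨w, hw, hwu⟩
  obtain ⟨δ, hδ, hball⟩ := Metric.isOpen_iff.1 hu w hwu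
  have hcont : Continuous fun N : Matrix n n K => ‖N.charpoly.eval w‖ := by
    simp only [Matrix.eval_charpoly]
    fun_prop
  have hsmall : ‖M.charpoly.eval w‖ < δ ^ Fintype.card n := by
    rw [(Matrix.mem_spectrum_iff_isRoot_charpoly.1 hw).eq_zero, norm_zero]
    positivity
  filter_upwards [hcont.continuousAt.eventually_lt_const hsmall] with N hN
  obtain ⟨z, hz, hzw⟩ := exists_mem_roots_norm_sub_lt N.charpoly_monic (IsAlgClosed.splits _) hδ.le
    (N.charpoly_natDegree_eq_dim.symm ▸ hN)
  exact ⟨z, Matrix.mem_spectrum_iff_isRoot_charpoly.2 (isRoot_of_mem_roots hz),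
    hball (by rwa [Metric.mem_ball, dist_comm, dist_eq_norm])⟩

theorem continuous_sInf_image_spectrum {X : Type*} [TopologicalSpace X]
    {M : X → Matrix n n ℂ} (hM : Continuous M) {f : ℂ → ℝ}
    (hf : ∀ x, ∀ z ∈ spectrum ℂ (M x), ContinuousAt f z) :
    Continuous fun x => sInf (f '' spectrum ℂ (M x)) :=
  continuous_iff_continuousAt.2 fun x => continuousAt_sInf_image
    (((upperHemicontinuous_matrix_spectrum ℂ).comp hM).upperHemicontinuousAt x)
    (((lowerHemicontinuous_matrix_spectrum ℂ).comp hM).lowerHemicontinuousAt x)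
    ((M x).finite_spectrum.image f).bddBelow (hf x)

end MatrixSpectrum

theorem det_fromBlocks_of_commute {n R : Type*} [Fintype n] [DecidableEq n] [CommRing R]
    (A B : Matrix n n R) {C D : Matrix n n R} (hCD : Commute C D) :
    (fromBlocks A B C D).det = (A * D - B * C).det := by
  let ι : Matrix n n R →+* Matrix n n R[X] := Polynomial.C.mapMatrix
  let ev : R[X] →+* R := evalRingHom 0
  -- Perturbing `D` to `X + D` makes its determinant regular, so that it can be cancelled.
  let D' : Matrix n n R[X] := charmatrix (-D)
  have hev : ∀ M, ev.mapMatrix (ι M) = M := fun M => by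
    ext i j
    simp [ι, ev]
  have hevD' : ev.mapMatrix D' = D := by
    ext i j
    simp [D', ev, charmatrix, Matrix.diagonal_apply, apply_ite]
  have hcomm : Commute (ι C) D' :=
    (Matrix.scalar_commute X (Commute.all X) (ι C)).symm.sub_right (hCD.neg_right.map ι)
  have hprod : fromBlocks (ι A) (ι B) (ι C) D' * fromBlocks D' 0 (-ι C) 1 =
      fromBlocks (ι A * D' - ι B * ι C) (ι B) 0 D' := by
    simp [fromBlocks_multiply, hcomm.eq, sub_eq_add_neg]
  have hdet : (fromBlocks (ι A) (ι B) (ι C) D').det = (ι A * D' - ι B * ι C).det := by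
    have hregular : IsRegular D'.det := (Matrix.charpoly_monic (-D)).isRegular
    refine hregular.right ?_
    simpa [det_fromBlocks_zero₁₂, det_fromBlocks_zero₂₁] using congrArg Matrix.det hprod
  calc (fromBlocks A B C D).det = ev (fromBlocks (ι A) (ι B) (ι C) D').det := by
        rw [RingHom.map_det, RingHom.mapMatrix_apply, fromBlocks_map]
        simp only [← RingHom.mapMatrix_apply, hev, hevD']
    _ = ev (ι A * D' - ι B * ι C).det := by rw [hdet]
    _ = (A * D - B * C).det := by
        simp only [RingHom.map_det, map_sub, map_mul, hev, hevD']

section Pencil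

variable {k : Type} [Fintype k] [DecidableEq k] {C D : Matrix k k ℂ}

theorem pencilSpec_eq_spectrum (hD : IsUnit D.det) : pencilSpec C D = spectrum ℂ (C * D⁻¹) := by
  ext lam
  have hfactor : C - lam • D = -((algebraMap ℂ _ lam - C * D⁻¹) * D) := by
    rw [sub_mul, mul_assoc, nonsing_inv_mul D hD, mul_one, ← Algebra.smul_def, neg_sub]
  rw [spectrum.mem_iff, ← (D.isUnit_iff_isUnit_det.2 hD).mul_right_iff, ← IsUnit.neg_iff,
    ← hfactor, isUnit_iff_isUnit_det, isUnit_iff_ne_zero, not_not]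
  rfl

theorem neg_conj_mem_pencilSpec {J : Matrix k k ℂ} (hC : J * Cᴴ * J = C) (hD : J * Dᴴ * J = -D)
    {lam : ℂ} (hlam : lam ∈ pencilSpec C D) : -conj lam ∈ pencilSpec C D := by
  have hfactor : C - (-conj lam) • D = J * (C - lam • D)ᴴ * J := by
    rw [conjTranspose_sub, conjTranspose_smul, mul_sub, sub_mul, hC, mul_smul_comm, smul_mul_assoc,
      hD, smul_neg, neg_smul, starRingEnd_apply]
  have hdet : (C - lam • D).det = 0 := hlam
  change (C - (-conj lam) • D).det = 0
  rw [hfactor, det_mul, det_mul, det_conjTranspose, hdet, star_zero, mul_zero, zero_mul]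

end Pencil

section PencilMatrices

variable {m : ℕ}

theorem conj_exp_ofReal_mul_I (θ : ℝ) : conj (Complex.exp (θ * I)) = Complex.exp (-(θ * I)) := by
  rw [← Complex.exp_conj, map_mul, conj_ofReal, conj_I, mul_neg]

theorem J_mul_conjTranspose_pencilC_mul_J (A : Matrix (Fin m) (Fin m) ℂ) (ε : ℝ) (z₀ : ℂ) :
    J (Fin m) ℂ * (pencilC A ε z₀)ᴴ * J (Fin m) ℂ = pencilC A ε z₀ := by
  simp [J, pencilC, fromBlocks_conjTranspose, fromBlocks_multiply]

theorem J_mul_conjTranspose_pencilD_mul_J (θ : ℝ) :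
    J (Fin m) ℂ * (pencilD m θ)ᴴ * J (Fin m) ℂ = -pencilD m θ := by
  simp [J, pencilD, fromBlocks_conjTranspose, fromBlocks_multiply, fromBlocks_neg,
    conj_exp_ofReal_mul_I, Complex.exp_neg]

theorem det_pencilC (A : Matrix (Fin m) (Fin m) ℂ) (ε : ℝ) (z₀ : ℂ) :
    (pencilC A ε z₀).det =
      (-1) ^ m * ((A - z₀ • 1) * (A - z₀ • 1)ᴴ - ((ε : ℂ) ^ 2) • 1).det := by
  have hcomm : Commute ((ε : ℂ) • 1) (-(A - z₀ • 1)ᴴ) := (Commute.one_left _).smul_left _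
  have hneg : (A - z₀ • 1) * -(A - z₀ • 1)ᴴ - ((-(ε : ℂ)) • 1) * ((ε : ℂ) • 1) =
      -((A - z₀ • 1) * (A - z₀ • 1)ᴴ - ((ε : ℂ) ^ 2) • 1) := by
    simp only [mul_neg, neg_smul, neg_mul, smul_mul_smul_comm, mul_one, sq]
    abel
  rw [pencilC, det_fromBlocks_of_commute _ _ hcomm, hneg, det_neg, Fintype.card_fin]

theorem isSingularValue_iff_det_pencilC_eq_zero {A : Matrix (Fin m) (Fin m) ℂ} {ε : ℝ}
    (hε : 0 ≤ ε) {z₀ : ℂ} :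
    IsSingularValue (A - z₀ • 1) ε ↔ (pencilC A ε z₀).det = 0 := by
  simp [IsSingularValue, hε, det_pencilC]

theorem det_pencilD (m : ℕ) (θ : ℝ) : (pencilD m θ).det = 1 := by
  rw [pencilD, det_fromBlocks_zero₂₁, det_smul, det_smul, det_one, mul_one, mul_one, ← mul_pow]
  have hphase : -(I * Complex.exp (θ * I)) * (I * Complex.exp (-(θ * I))) = 1 := by
    rw [neg_mul, mul_mul_mul_comm, I_mul_I, ← Complex.exp_add, add_neg_cancel, Complex.exp_zero,
      neg_one_mul, neg_neg]
  rw [hphase, one_pow]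

theorem continuous_pencilD (m : ℕ) : Continuous (pencilD m) := by
  refine Continuous.matrix_fromBlocks ?_ ?_ ?_ ?_ <;> fun_prop

theorem continuous_inv_pencilD (m : ℕ) : Continuous fun θ => (pencilD m θ)⁻¹ := by
  simpa only [Matrix.inv_def, det_pencilD, Ring.inverse_one, one_smul] using
    (continuous_pencilD m).matrix_adjugate

theorem periodic_pencilD (m : ℕ) : Function.Periodic (pencilD m) (2 * Real.pi) := by
  intro θ
  have hexp : Complex.exp ((θ + 2 * Real.pi : ℝ) * I) = Complex.exp (θ * I) := by
    push_cast
    rw [add_mul, Complex.exp_periodic]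
  simp only [pencilD, Complex.exp_neg, hexp]

end PencilMatrices

theorem sq_arg_conj (z : ℂ) : arg (conj z) ^ 2 = arg z ^ 2 := by
  rw [arg_conj]
  split_ifs with h
  · rw [h]
  · rw [neg_sq]

theorem continuousAt_sq_arg {z : ℂ} (hz : z ≠ 0) : ContinuousAt (fun w => arg w ^ 2) z := by
  have hangle : ContinuousAt (fun w => InnerProductGeometry.angle 1 w ^ 2) z :=
    ((InnerProductGeometry.continuousAt_angle (x := ((1 : ℂ), z)) one_ne_zero hz).comp
      (by fun_prop : ContinuousAt (fun w : ℂ => ((1 : ℂ), w)) z)).pow 2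
  refine hangle.congr ((isOpen_ne.eventually_mem hz).mono fun w hw => ?_)
  simp only [Complex.angle_one_left hw, sq_abs]

theorem continuousAt_sq_arg_neg_I_mul {lam : ℂ} (hlam : lam ≠ 0) :
    ContinuousAt (fun w => arg (-I * w) ^ 2) lam :=
  (continuousAt_sq_arg (mul_ne_zero (neg_ne_zero.2 I_ne_zero) hlam)).comp
    (continuous_const_mul (-I)).continuousAt

theorem aFun_eq_sInf_image_spectrum {m : ℕ} (A : Matrix (Fin m) (Fin m) ℂ) (ε : ℝ) (z₀ : ℂ)
    (θ : ℝ) : aFun A ε z₀ θ =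
      sInf ((fun lam => arg (-I * lam) ^ 2) '' spectrum ℂ (pencilC A ε z₀ * (pencilD m θ)⁻¹)) := by
  rw [← pencilSpec_eq_spectrum (det_pencilD m θ ▸ isUnit_one), aFun]
  congr 1
  ext x
  constructor
  · rintro ⟨lam, hlam, -, rfl⟩
    exact mem_image_of_mem _ hlam
  rintro ⟨lam, hlam, rfl⟩
  rcases le_total lam.re 0 with hre | hre
  · exact ⟨lam, hlam, hre, rfl⟩
  refine ⟨-conj lam, neg_conj_mem_pencilSpec (J_mul_conjTranspose_pencilC_mul_J A ε z₀)
    (J_mul_conjTranspose_pencilD_mul_J θ) hlam, by simpa using hre, ?_⟩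
  have hreflect : -I * -conj lam = conj (-I * lam) := by simp
  simp only [hreflect, sq_arg_conj]

theorem stmt5 {m : ℕ} (A : Matrix (Fin m) (Fin m) ℂ) (ε : ℝ) (hε : 0 ≤ ε) (z₀ : ℂ)
    (hsv : ¬ IsSingularValue (A - z₀ • 1) ε) :
    Function.Periodic (aFun A ε z₀) (2 * Real.pi) ∧ Continuous (aFun A ε z₀) := by
  refine ⟨fun θ => by simp only [aFun, periodic_pencilD m θ], ?_⟩
  have hdet : (pencilC A ε z₀).det ≠ 0 := mt (isSingularValue_iff_det_pencilC_eq_zero hε).2 hsv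
  have hzero : ∀ θ, ∀ lam ∈ spectrum ℂ (pencilC A ε z₀ * (pencilD m θ)⁻¹), lam ≠ 0 := by
    rintro θ _ hlam rfl
    rw [← pencilSpec_eq_spectrum (det_pencilD m θ ▸ isUnit_one)] at hlam
    exact hdet (by simpa [pencilSpec] using hlam)
  rw [funext (aFun_eq_sInf_image_spectrum A ε z₀)]
  exact continuous_sInf_image_spectrum (continuous_const.mul (continuous_inv_pencilD m))
    fun θ lam hlam => continuousAt_sq_arg_neg_I_mul (hzero θ lam hlam)
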